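/- Let T be a TPT probability density supported in [a,b] with 0 < a < b, let λ > 0 be a constant influx, and let ω(r) = λ/(r·T₋₁) be the update frequency. Then the x-independent function f(x,r) = λ·r·T(r) is a stationary solution of the kinetic equation for the joint phase/TPT density: for every x > 0 and almost every r > 0, (1/r)·∂f/∂x(x,r) = T(r)·∫₀^∞ ω(r')·f(x,r') dr' − ω(r)·f(x,r), and it satisfies the boundary condition f(0,r) = λ·r·T(r). -/

import Mathlib

open MeasureTheory Set

/-! The gain term of the kinetic equation is a multiple of `T` and the loss term is `ω f`, so an
`x`-independent density solves it exactly when the two balance, that is, when it is proportional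
to `T / ω`; the mass `1` of `T` makes every factor of proportionality admissible. Since `1 / ω` is
proportional to `r`, the density `λ r T(r)` has this form. The frequency `ω` is well defined because
a density that vanishes near `0` has a finite and positive inverse moment `T₋₁`. -/

/-- The inverse moment `T₋₁` of a TPT density, with value `0` if the integral diverges. -/
noncomputable def inverseMoment (T : ℝ → ℝ) : ℝ :=
  ∫ r in Ioi (0 : ℝ), r⁻¹ * T r

/-- The update frequency `ω(r) = λ / (r T₋₁)` for the influx `λ`. -/
noncomputable def updateFrequency (lam : ℝ) (T : ℝ → ℝ) (r : ℝ) : ℝ :=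
  lam / (r * inverseMoment T)

/-- The right-hand side of the kinetic equation: a state `r` is left at rate `ω r`, and the new
state is drawn from the density `T` with respect to `μ`. -/
noncomputable def collision {α : Type*} [MeasurableSpace α] (μ : Measure α) (ω T g : α → ℝ)
    (r : α) : ℝ :=
  T r * (∫ s, ω s * g s ∂μ) - ω r * g r

/-- The kinetic equation for a joint phase/TPT density `f x r` on the half-lines `x > 0` and
`r > 0`; the boundary condition at `x = 0` is not part of it. Where `f` is not differentiable
in `x`, `deriv` has the value `0`. -/
def IsKineticSolution (ω T : ℝ → ℝ) (f : ℝ → ℝ → ℝ) : Prop :=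
  ∀ x > (0 : ℝ), ∀ᵐ r ∂(volume.restrict (Ioi (0 : ℝ))),
    (1 / r) * deriv (fun x' => f x' r) x = collision (volume.restrict (Ioi 0)) ω T (f x) r

theorem collision_ae_eq_zero_iff {α : Type*} [MeasurableSpace α] {μ : Measure α}
    {ω T g : α → ℝ} (hω : ∀ᵐ r ∂μ, ω r ≠ 0) (hT : ∫ r, T r ∂μ = 1) :
    (∀ᵐ r ∂μ, collision μ ω T g r = 0) ↔ ∃ c : ℝ, ∀ᵐ r ∂μ, g r = c * T r / ω r := by
  constructor
  · intro h
    refine ⟨∫ s, ω s * g s ∂μ, ?_⟩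
    filter_upwards [h, hω] with r hr hωr
    rw [eq_div_iff hωr]
    linarith [show T r * (∫ s, ω s * g s ∂μ) - ω r * g r = 0 from hr]
  · rintro ⟨c, hg⟩
    have balance : ∀ᵐ r ∂μ, ω r * g r = c * T r := by
      filter_upwards [hg, hω] with r hr hωr
      rw [hr, mul_div_cancel₀ _ hωr]
    have gain : ∫ r, ω r * g r ∂μ = c := by
      rw [integral_congr_ae balance, integral_const_mul, hT, mul_one]
    filter_upwards [balance] with r hr
    rw [collision, gain, hr, mul_comm, sub_self]

theorem isKineticSolution_const_iff {ω T g : ℝ → ℝ} :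
    IsKineticSolution ω T (fun _ => g) ↔
      ∀ᵐ r ∂(volume.restrict (Ioi (0 : ℝ))), collision (volume.restrict (Ioi 0)) ω T g r = 0 := by
  simp only [IsKineticSolution, deriv_const, mul_zero, eq_comm (a := (0 : ℝ))]
  exact ⟨fun h => h 1 one_pos, fun h _ _ => h⟩

theorem integrableOn_inv_mul_of_forall_lt_eq_zero {T : ℝ → ℝ} {a : ℝ} {s : Set ℝ} (ha : 0 < a)
    (hT : IntegrableOn T s) (hzero : ∀ r < a, T r = 0) :
    IntegrableOn (fun r => r⁻¹ * T r) s := by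
  refine (hT.norm.const_mul a⁻¹).mono' (measurable_inv.aestronglyMeasurable.mul hT.1)
    (.of_forall fun r => ?_)
  rcases lt_or_ge r a with hra | har
  · simp [hzero r hra]
  · rw [norm_mul, norm_inv, Real.norm_of_nonneg (ha.le.trans har)]
    gcongr

theorem inverseMoment_pos {T : ℝ → ℝ} {a : ℝ} (ha : 0 < a) (hnonneg : ∀ r, 0 ≤ T r)
    (hzero : ∀ r < a, T r = 0) (hT : 0 < ∫ r in Ioi (0 : ℝ), T r) : 0 < inverseMoment T := by
  have hTint : IntegrableOn T (Ioi 0) := .of_integral_ne_zero hT.ne'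
  have hsupport : Function.support (fun r => r⁻¹ * T r) ∩ Ioi 0 = Function.support T ∩ Ioi 0 := by
    ext r
    simp +contextual [ne_of_gt]
  have hinv_nonneg : ∀ r ∈ Ioi (0 : ℝ), 0 ≤ r⁻¹ * T r :=
    fun r hr => mul_nonneg (inv_nonneg.2 (le_of_lt hr)) (hnonneg r)
  rw [inverseMoment, setIntegral_pos_iff_support_of_nonneg_ae
    (ae_restrict_of_forall_mem measurableSet_Ioi hinv_nonneg)
    (integrableOn_inv_mul_of_forall_lt_eq_zero ha hTint hzero), hsupport]
  exact (setIntegral_pos_iff_support_of_nonneg_ae (.of_forall hnonneg) hTint).1 hT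

theorem updateFrequency_ne_zero {T : ℝ → ℝ} {lam r : ℝ} (hlam : lam ≠ 0)
    (hM : inverseMoment T ≠ 0) (hr : r ≠ 0) : updateFrequency lam T r ≠ 0 :=
  div_ne_zero hlam (mul_ne_zero hr hM)

theorem mul_mul_eq_div_updateFrequency {T : ℝ → ℝ} {lam : ℝ} (hlam : lam ≠ 0)
    (hM : inverseMoment T ≠ 0) (r : ℝ) :
    lam * r * T r = lam ^ 2 / inverseMoment T * T r / updateFrequency lam T r := by
  rw [updateFrequency]
  field_simp

theorem stmt0_general {T : ℝ → ℝ} {lam : ℝ} {f : ℝ → ℝ → ℝ} (hlam : lam ≠ 0)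
    (hTnorm : ∫ r in Ioi (0 : ℝ), T r = 1) (hM : inverseMoment T ≠ 0)
    (hf : ∀ x r, f x r = lam * r * T r) :
    IsKineticSolution (updateFrequency lam T) T f ∧ ∀ r, f 0 r = lam * r * T r := by
  obtain rfl : f = fun _ r => lam * r * T r := funext₂ hf
  have hω : ∀ᵐ r ∂(volume.restrict (Ioi (0 : ℝ))), updateFrequency lam T r ≠ 0 :=
    ae_restrict_of_forall_mem measurableSet_Ioi
      fun _ hr => updateFrequency_ne_zero hlam hM (ne_of_gt hr)
  refine ⟨isKineticSolution_const_iff.2 ((collision_ae_eq_zero_iff hω hTnorm).2 ?_), hf 0⟩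
  exact ⟨_, .of_forall (mul_mul_eq_div_updateFrequency hlam hM)⟩

/-- The x-independent joint density f(x,r) = λ·r·T(r) is a stationary solution of the
kinetic equation for the joint phase/TPT density, with boundary condition
f(0,r) = λ·r·T(r), where ω(r) = λ/(r·T₋₁). -/
theorem stmt0 (T : ℝ → ℝ) (a b lam Tneg1 : ℝ) (f : ℝ → ℝ → ℝ)
    (ha : 0 < a) (hab : a < b) (hlam : 0 < lam)
    (hTmeas : Measurable T) (hTnn : ∀ r, 0 ≤ T r)
    (hTsupp : ∀ r, r ∉ Icc a b → T r = 0)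
    (hTnorm : ∫ r in Ioi (0:ℝ), T r = 1)
    (hTneg1 : Tneg1 = ∫ r in Ioi (0:ℝ), r⁻¹ * T r)
    (hf : ∀ x r, f x r = lam * r * T r) :
    (∀ x > (0:ℝ), ∀ᵐ r ∂(volume.restrict (Ioi (0:ℝ))),
      (1 / r) * deriv (fun x' => f x' r) x =
        T r * (∫ r' in Ioi (0:ℝ), (lam / (r' * Tneg1)) * f x r')
          - (lam / (r * Tneg1)) * f x r) ∧
    (∀ r, f 0 r = lam * r * T r) := by
  subst hTneg1
  have hzero : ∀ r < a, T r = 0 := fun r hr => hTsupp r fun h => hr.not_ge h.1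
  exact stmt0_general hlam.ne' hTnorm (inverseMoment_pos ha hTnn hzero (by simp [hTnorm])).ne' hf
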